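/- arXiv:1303.0849 — 5 statements merged into one kernel-verified Lean document; each statement's English description precedes it below -/
import Mathlib

section
/- Let ρ0 > 0 and a1, a2 be nonzero real numbers, and set L1 = (π/4)·a1·ρ0², L2 = (π/4)·a2·ρ0², c3 = ρ0²/2. Suppose real numbers c1, c2 and α satisfy c2·c3 = −2L1·L2/π², 4c1² = α² − (L1/L2)·c2, and α² = 4c1² + 4c1·c3 + c3² + (L2/L1)·c2. Then c2 = −(1/4)·a1·a2·ρ0², c1 = −(1/8)(ρ0² + a1² − a2²), and α² = (1/16)(ρ0² − a1² − a2²)² − (1/4)·a1²·a2². -/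
open Real

/-- Resolution of the two-nut reconstruction in Myers-Perry parameters. -/
theorem stmt_5 (ρ0 a1 a2 : ℝ) (hρ0 : 0 < ρ0) (ha1 : a1 ≠ 0) (ha2 : a2 ≠ 0)
    (L1 L2 c3 : ℝ)
    (hL1 : L1 = (π / 4) * a1 * ρ0 ^ 2) (hL2 : L2 = (π / 4) * a2 * ρ0 ^ 2)
    (hc3 : c3 = ρ0 ^ 2 / 2)
    (c1 c2 α : ℝ)
    (h1 : c2 * c3 = -(2 * L1 * L2) / π ^ 2)
    (h2 : 4 * c1 ^ 2 = α ^ 2 - (L1 / L2) * c2)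
    (h3 : α ^ 2 = 4 * c1 ^ 2 + 4 * c1 * c3 + c3 ^ 2 + (L2 / L1) * c2) :
    c2 = -(1 / 4) * a1 * a2 * ρ0 ^ 2 ∧
      c1 = -(1 / 8) * (ρ0 ^ 2 + a1 ^ 2 - a2 ^ 2) ∧
      α ^ 2 = (1 / 16) * (ρ0 ^ 2 - a1 ^ 2 - a2 ^ 2) ^ 2 - (1 / 4) * a1 ^ 2 * a2 ^ 2 := by
  have hπ : π ≠ 0 := Real.pi_ne_zero
  have hρ : ρ0 ≠ 0 := hρ0.ne'
  have hρ2 : ρ0 ^ 2 ≠ 0 := pow_ne_zero 2 hρ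
  have e0 : -(2 * L1 * L2) / π ^ 2 = -(1 / 8) * a1 * a2 * ρ0 ^ 4 := by
    rw [hL1, hL2]
    field_simp
    ring
  have hc2 : c2 = -(1 / 4) * a1 * a2 * ρ0 ^ 2 := by
    rw [e0, hc3] at h1
    apply mul_right_cancel₀ hρ2
    linear_combination 2 * h1
  have e1 : (L1 / L2) * c2 = -(1 / 4) * a1 ^ 2 * ρ0 ^ 2 := by
    rw [hL1, hL2, hc2]
    field_simp
  have e2 : (L2 / L1) * c2 = -(1 / 4) * a2 ^ 2 * ρ0 ^ 2 := by
    rw [hL1, hL2, hc2]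
    field_simp
  rw [e1] at h2
  rw [e2, hc3] at h3
  have hc1 : c1 = -(1 / 8) * (ρ0 ^ 2 + a1 ^ 2 - a2 ^ 2) := by
    apply mul_right_cancel₀ hρ2
    linear_combination (-1 / 2) * h3 - (1 / 2) * h2
  refine ⟨hc2, hc1, ?_⟩
  rw [hc1] at h2
  linear_combination -h2
end

section
/- Let ρ0, a1, a2 be real numbers, set β = (1/4)(−ρ0² + a1² − a2²), γ = (1/4)(ρ0² + a1² − a2²), and let α be a real number with α² = (1/16)(ρ0² − a1² − a2²)² − (1/4)·a1²·a2². Define the symmetric 3×3 matrix P₁(z) by P₁₁ = −(z+γ)/(2(z²−α²)), P₁₂ = −ρ0²·a1/(4(z²−α²)), P₁₃ = ρ0²·a1·a2/(4(z²−α²)), P₂₂ = −(z² + z(β−γ) + γ² − βγ − α²)/(z²−α²), P₂₃ = −a2·ρ0²·(z−γ)/(2(z²−α²)), P₃₃ = 2(z−β) + a2²·ρ0²·(z−γ)/(2(z²−α²)). Then det P₁(z) = 1 for every real z with z² ≠ α². -/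
/-- The Myers-Perry patching matrix adapted to the top axis rod has unit
determinant. -/
theorem stmt_6 (ρ0 a1 a2 β γ α : ℝ)
    (hβ : β = (1 / 4) * (-ρ0 ^ 2 + a1 ^ 2 - a2 ^ 2))
    (hγ : γ = (1 / 4) * (ρ0 ^ 2 + a1 ^ 2 - a2 ^ 2))
    (hα : α ^ 2 = (1 / 16) * (ρ0 ^ 2 - a1 ^ 2 - a2 ^ 2) ^ 2 - (1 / 4) * a1 ^ 2 * a2 ^ 2) :
    ∀ z : ℝ, z ^ 2 ≠ α ^ 2 →
      (!![-(z + γ) / (2 * (z ^ 2 - α ^ 2)),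
          -(ρ0 ^ 2 * a1) / (4 * (z ^ 2 - α ^ 2)),
          ρ0 ^ 2 * a1 * a2 / (4 * (z ^ 2 - α ^ 2));
          -(ρ0 ^ 2 * a1) / (4 * (z ^ 2 - α ^ 2)),
          -(z ^ 2 + z * (β - γ) + γ ^ 2 - β * γ - α ^ 2) / (z ^ 2 - α ^ 2),
          -(a2 * ρ0 ^ 2 * (z - γ)) / (2 * (z ^ 2 - α ^ 2));
          ρ0 ^ 2 * a1 * a2 / (4 * (z ^ 2 - α ^ 2)),
          -(a2 * ρ0 ^ 2 * (z - γ)) / (2 * (z ^ 2 - α ^ 2)),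
          2 * (z - β) + a2 ^ 2 * ρ0 ^ 2 * (z - γ) / (2 * (z ^ 2 - α ^ 2))] :
        Matrix (Fin 3) (Fin 3) ℝ).det = 1 := by
  intro z hz
  have hD : z ^ 2 - α ^ 2 ≠ 0 := sub_ne_zero.mpr hz
  generalize α ^ 2 = A at *
  rw [Matrix.det_fin_three]
  simp only [Matrix.of_apply, Matrix.cons_val', Matrix.cons_val_zero, Matrix.cons_val_one,
    Matrix.cons_val, Matrix.cons_val_fin_one]
  obtain ⟨D, hDd⟩ : ∃ D, D = z ^ 2 - A := ⟨_, rfl⟩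
  rw [← hDd] at hD ⊢
  field_simp
  subst hDd hβ hγ hα
  ring
end

section
/- Let α, β, λ, ν be real numbers satisfying 2ν² = (λ + α)(λ − α)(λ + β), and set γ = β + λ and δ = −α² + βλ + λ². Define the symmetric 3×3 matrix P₁(z) with entries P₁₁ = −(z+λ)/(2(z+α)(z−β)), P₁₂ = ν/((z+α)(z−β)), P₁₃ = 0, P₂₂ = −(z² − γz + δ)/((z+α)(z−β)), P₂₃ = 0, P₃₃ = 2(z+α)(z−β)/(z−α). Then det P₁(z) = 1 for every real z with z ∉ {α, −α, β}. -/
/-- The black ring patching matrix adapted to the top axis rod has unit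
determinant. -/
theorem stmt_10 (α β lam ν : ℝ)
    (h : 2 * ν ^ 2 = (lam + α) * (lam - α) * (lam + β))
    (γ δ : ℝ) (hγ : γ = β + lam) (hδ : δ = -α ^ 2 + β * lam + lam ^ 2) :
    ∀ z : ℝ, z ≠ α → z ≠ -α → z ≠ β →
      (!![-(z + lam) / (2 * (z + α) * (z - β)),
          ν / ((z + α) * (z - β)), 0;
          ν / ((z + α) * (z - β)),
          -(z ^ 2 - γ * z + δ) / ((z + α) * (z - β)), 0;
          0, 0, 2 * (z + α) * (z - β) / (z - α)] :
        Matrix (Fin 3) (Fin 3) ℝ).det = 1 := by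
  intro z h1 h2 h3
  have a1 : z - α ≠ 0 := sub_ne_zero.mpr h1
  have a2 : z + α ≠ 0 := fun e => h2 (by linarith)
  have a3 : z - β ≠ 0 := sub_ne_zero.mpr h3
  have key : (z + lam) * (z ^ 2 - γ * z + δ) - 2 * ν ^ 2 = (z - α) * ((z + α) * (z - β)) := by
    rw [h, hγ, hδ]; ring
  rw [Matrix.det_fin_three]
  simp only [Matrix.of_apply, Matrix.cons_val', Matrix.cons_val_zero, Matrix.cons_val_one,
    Matrix.cons_val]
  have e : ((z + lam) * (z ^ 2 - γ * z + δ) - 2 * ν ^ 2) / ((z - α) * ((z + α) * (z - β))) = 1 := by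
    rw [key]; exact div_self (mul_ne_zero a1 (mul_ne_zero a2 a3))
  rw [← e]
  field_simp
  ring
end

section
/- Let α, β, L be real numbers with 0 < α ≤ β and L ≠ 0, and define F(a) = a³ + β·a² − α²·a − α²·β − 2L²/π². Then F has exactly one real root A with A > −α, and this root satisfies A > 0. -/
open Real

/-- The cubic F arising in the three-nut black ring reconstruction has exactly
one real root greater than −α, and this root is positive. -/
theorem stmt_11 (α β L : ℝ) (hα : 0 < α) (hαβ : α ≤ β) (hL : L ≠ 0) :
    ∃ A : ℝ,
      (A ^ 3 + β * A ^ 2 - α ^ 2 * A - α ^ 2 * β - 2 * L ^ 2 / π ^ 2 = 0 ∧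
        A > -α ∧ A > 0) ∧
      ∀ A' : ℝ,
        A' ^ 3 + β * A' ^ 2 - α ^ 2 * A' - α ^ 2 * β - 2 * L ^ 2 / π ^ 2 = 0 →
        A' > -α → A' = A := by
  have hc : 0 < 2 * L ^ 2 / π ^ 2 := by
    have := Real.pi_pos
    positivity
  generalize 2 * L ^ 2 / π ^ 2 = c at hc
  have key : ∀ x : ℝ, x ^ 3 + β * x ^ 2 - α ^ 2 * x - α ^ 2 * β - c = 0 → x > -α → α < x := by
    intro x hx hxa
    by_contra h
    have h1 : 0 ≤ (α - x) * ((x + α) * (x + β)) :=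
      mul_nonneg (by linarith) (mul_nonneg (by linarith) (by linarith))
    nlinarith
  have hcont : ContinuousOn
      (fun x : ℝ => x ^ 3 + β * x ^ 2 - α ^ 2 * x - α ^ 2 * β - c) (Set.Icc α (α + 1 + c)) := by
    fun_prop
  have hmem : (0 : ℝ) ∈ Set.Icc
      ((fun x : ℝ => x ^ 3 + β * x ^ 2 - α ^ 2 * x - α ^ 2 * β - c) α)
      ((fun x : ℝ => x ^ 3 + β * x ^ 2 - α ^ 2 * x - α ^ 2 * β - c) (α + 1 + c)) := by
    constructor
    · show α ^ 3 + β * α ^ 2 - α ^ 2 * α - α ^ 2 * β - c ≤ 0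
      nlinarith
    · show 0 ≤ (α + 1 + c) ^ 3 + β * (α + 1 + c) ^ 2 - α ^ 2 * (α + 1 + c) - α ^ 2 * β - c
      have h1 : 1 ≤ (α + 1 + c + α) * (α + 1 + c + β) :=
        one_le_mul_of_one_le_of_one_le (by linarith) (by linarith)
      have h2 : (1 + c) * 1 ≤ (1 + c) * ((α + 1 + c + α) * (α + 1 + c + β)) :=
        mul_le_mul_of_nonneg_left h1 (by linarith)
      linarith
  obtain ⟨A, hA, hFA⟩ := intermediate_value_Icc (by linarith) hcont hmem
  have hFA' : A ^ 3 + β * A ^ 2 - α ^ 2 * A - α ^ 2 * β - c = 0 := hFA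
  have hA1 : α ≤ A := hA.1
  refine ⟨A, ⟨hFA', by linarith, by linarith⟩, ?_⟩
  intro x hx hxa
  have hxα := key x hx hxa
  have hm : (x - A) * (x ^ 2 + x * A + A ^ 2 + β * (x + A) - α ^ 2) = 0 := by
    linear_combination hx - hFA'
  have hpos : 0 < x ^ 2 + x * A + A ^ 2 + β * (x + A) - α ^ 2 := by
    have h1 : 0 < x * A := mul_pos (by linarith) (by linarith)
    have h2 : 0 < β * (x + A) := mul_pos (by linarith) (by linarith)
    nlinarith
  rcases mul_eq_zero.mp hm with h | h
  · linarith
  · linarith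
end

section
/- Let b, c, κ be real numbers with 0 < c < 1, 0 < b < 1, κ > 0, and set α = cκ², β = κ², λ = κ²·(2b − bc − c)/(1 − b). Then the non-conicality condition (β + λ)/(β + α) = (β + α)/(β − α) holds if and only if b = 2c/(1 + c²). -/
/-- Black ring: the non-conicality condition is equivalent to the balance
condition b = 2c/(1+c²). -/
theorem stmt_13 (b c κ : ℝ) (hc0 : 0 < c) (hc1 : c < 1) (hb0 : 0 < b)
    (hb1 : b < 1) (hκ : 0 < κ)
    (α β lam : ℝ) (hα : α = c * κ ^ 2) (hβ : β = κ ^ 2)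
    (hlam : lam = κ ^ 2 * (2 * b - b * c - c) / (1 - b)) :
    (β + lam) / (β + α) = (β + α) / (β - α) ↔ b = 2 * c / (1 + c ^ 2) := by
  have h1 : (1 - b) ≠ 0 := by linarith
  have h2 : (1 + c) ≠ 0 := by positivity
  have h3 : (1 - c) ≠ 0 := by linarith
  have hk : κ ^ 2 ≠ 0 := by positivity
  have h4 : (1 + c ^ 2) ≠ 0 := by positivity
  have e1 : β + lam = κ ^ 2 * ((1 + b) * (1 - c)) / (1 - b) := by
    rw [hβ, hlam]; field_simp; ring
  have e2 : β + α = κ ^ 2 * (1 + c) := by rw [hβ, hα]; ring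
  have e3 : β - α = κ ^ 2 * (1 - c) := by rw [hβ, hα]; ring
  rw [e1, e2, e3, div_eq_div_iff (mul_ne_zero hk h2) (mul_ne_zero hk h3), eq_div_iff h4,
    div_mul_eq_mul_div, div_eq_iff h1]
  constructor
  · intro h
    have h5 : (κ ^ 2 * κ ^ 2) * (b * (1 + c ^ 2)) = (κ ^ 2 * κ ^ 2) * (2 * c) := by
      linear_combination h / 2
    exact mul_left_cancel₀ (mul_ne_zero hk hk) h5
  · intro h
    linear_combination 2 * (κ ^ 2 * κ ^ 2) * h
end
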